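/- The polynomial D_n^B(q, Z) = sum over signed derangements w in D_n^B of q^{fmaj w} Z^{neg w} satisfies the recurrence D_0^B(q,Z) = 1 and D_{n+1}^B(q,Z) = (1 + qZ) * ((1 - q^{2n+2})/(1 - q^2)) * D_n^B(q,Z) + (-1)^{n+1} q^{n(n+1)} for n ≥ 0. -/

import Mathlib

open Finset

attribute [local instance] Classical.propDecidable

noncomputable section

/-- The word `x_1 x_2 ... x_n` (0-indexed) of a signed permutation of order `n`,
encoded as a pair (permutation, signs): `x_i = ±(σ(i)+1)`. -/
def sword (n : ℕ) (w : Equiv.Perm (Fin n) × (Fin n → Bool)) : ℕ → ℤ :=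
  fun i => if h : i < n then
      (if w.2 ⟨i, h⟩ then -(((w.1 ⟨i, h⟩ : ℕ) : ℤ) + 1) else (((w.1 ⟨i, h⟩ : ℕ) : ℤ) + 1))
    else 0

/-- number of negative letters -/
def negStat (n : ℕ) (x : ℕ → ℤ) : ℕ := ((Finset.range n).filter (fun i => x i < 0)).card

/-- number of positive fixed points (`x_i = i`, 1-indexed) -/
def fixPlus (n : ℕ) (x : ℕ → ℤ) : ℕ :=
  ((Finset.range n).filter (fun i => x i = (i : ℤ) + 1)).card

/-- number of negative fixed points (`x_i = -i`, 1-indexed) -/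
def fixMinus (n : ℕ) (x : ℕ → ℤ) : ℕ :=
  ((Finset.range n).filter (fun i => x i = -((i : ℤ) + 1))).card

/-- major index of the word -/
def majStat (n : ℕ) (x : ℕ → ℤ) : ℕ :=
  ∑ i ∈ Finset.range (n - 1), if x (i + 1) < x i then i + 1 else 0

/-- number of inversions of the word -/
def invStat (n : ℕ) (x : ℕ → ℤ) : ℕ :=
  ((Finset.range n ×ˢ Finset.range n).filter (fun p => p.1 < p.2 ∧ x p.2 < x p.1)).card

/-- length function `ℓ(w) = inv w + ∑_{x_i<0} |x_i|` -/
def lenStat (n : ℕ) (x : ℕ → ℤ) : ℕ :=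
  invStat n x + ∑ i ∈ Finset.range n, if x i < 0 then (x i).natAbs else 0

/-- flag-major index `fmaj = 2 maj + neg` -/
def fmajStat (n : ℕ) (x : ℕ → ℤ) : ℕ := 2 * majStat n x + negStat n x

/-- the word `x_0 ... x_{m-1}` has its leftmost trough at position `2k` (1-indexed):
`x_1 > x_2 > ... > x_{2k}` and `x_{2k} < x_{2k+1}` (with `x_{m+1} = ∞`). -/
def IsDesarAt (m k : ℕ) (x : ℕ → ℤ) : Prop :=
  1 ≤ k ∧ 2 * k ≤ m ∧ (∀ i, i + 1 < 2 * k → x (i + 1) < x i) ∧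
    (2 * k = m ∨ x (2 * k - 1) < x (2 * k))

/-- a word of length `m` is a desarrangement (empty word included) -/
def IsDesar (m : ℕ) (x : ℕ → ℤ) : Prop :=
  m = 0 ∨ ∃ k, IsDesarAt m k x

/-- the length of the longest right factor of the word of length `n`
which is a desarrangement -/
def dlen (n : ℕ) (x : ℕ → ℤ) : ℕ :=
  sSup {m | m ≤ n ∧ IsDesar m (fun i => x (n - m + i))}

/-- number of letters of `w^-` in the pixed factorization `w = w^- w^+ w^d` -/
def pixMinus (n : ℕ) (x : ℕ → ℤ) : ℕ :=
  ((Finset.range (n - dlen n x)).filter (fun i => x i < 0)).card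

/-- number of letters of `w^+` in the pixed factorization `w = w^- w^+ w^d` -/
def pixPlus (n : ℕ) (x : ℕ → ℤ) : ℕ :=
  ((Finset.range (n - dlen n x)).filter (fun i => 0 < x i)).card

/-- the number of derangements of an `m`-element set -/
def dnum (m : ℕ) : ℕ :=
  (Finset.univ.filter (fun σ : Equiv.Perm (Fin m) => ∀ i, σ i ≠ i)).card

/-- the word of an ordinary permutation of `{1, ..., m}` -/
def pword (m : ℕ) (σ : Equiv.Perm (Fin m)) : ℕ → ℤ :=
  fun i => if h : i < m then ((σ ⟨i, h⟩ : ℕ) : ℤ) + 1 else 0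

/-- the q-ascending factorial `(q;q)_m` -/
def qq {K : Type*} [CommRing K] (q : K) (m : ℕ) : K :=
  ∏ i ∈ Finset.range m, (1 - q ^ (i + 1))

/-- `D_m(q)`: generating polynomial for derangements of order `m` by major index -/
def Dmaj {K : Type*} [CommRing K] (q : K) (m : ℕ) : K :=
  ∑ σ ∈ Finset.univ.filter (fun σ : Equiv.Perm (Fin m) => ∀ i, σ i ≠ i),
    q ^ majStat m (pword m σ)

/-- `D_n^B(q,Z)`: generating polynomial for signed derangements of order `n`
(no positive fixed point) by `(fmaj, neg)`. -/
def DB {K : Type*} [CommRing K] (q Z : K) (n : ℕ) : K :=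
  ∑ w ∈ Finset.univ.filter
      (fun w : Equiv.Perm (Fin n) × (Fin n → Bool) => fixPlus n (sword n w) = 0),
    q ^ fmajStat n (sword n w) * Z ^ negStat n (sword n w)

set_option linter.unusedSimpArgs false

/-- Gaussian binomial coefficients, defined through the Pascal recurrence. -/
def qb {K : Type*} [CommRing K] (p : K) : ℕ → ℕ → K
  | _, 0 => 1
  | 0, _ + 1 => 0
  | n + 1, m + 1 => qb p n m + p ^ (m + 1) * qb p n (m + 1)

section qbin

variable {K : Type*} [CommRing K] (p : K)

lemma qb_zero_right (n : ℕ) : qb p n 0 = 1 := by cases n <;> simp [qb]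

lemma qb_succ (n m : ℕ) :
    qb p (n + 1) (m + 1) = qb p n m + p ^ (m + 1) * qb p n (m + 1) := by simp [qb]

lemma qb_eq_zero (n : ℕ) : ∀ m, n < m → qb p n m = 0 := by
  induction n with
  | zero => intro m hm; obtain ⟨k, rfl⟩ : ∃ k, m = k + 1 := ⟨m - 1, by omega⟩; simp [qb]
  | succ n ih =>
    intro m hm
    obtain ⟨k, rfl⟩ : ∃ k, m = k + 1 := ⟨m - 1, by omega⟩
    rw [qb_succ, ih k (by omega), ih (k + 1) (by omega)]; simp

lemma qb_self (n : ℕ) : qb p n n = 1 := by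
  induction n with
  | zero => simp [qb]
  | succ n ih => rw [qb_succ, ih, qb_eq_zero p n (n + 1) (by omega)]; simp

/-- The second Pascal recurrence. -/
lemma qb_succ' (n : ℕ) : ∀ m,
    qb p (n + 1) (m + 1) = p ^ (n - m) * qb p n m + qb p n (m + 1) := by
  induction n with
  | zero =>
    intro m
    cases m <;> simp [qb]
  | succ n ih =>
    intro m
    rcases lt_or_ge n m with h | h
    · rw [qb_succ, qb_eq_zero p (n + 1) (m + 1) (by omega),
        show n + 1 - m = 0 by omega]
      simp
    · obtain ⟨d, rfl⟩ : ∃ d, n = m + d := ⟨n - m, by omega⟩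
      cases m with
      | zero =>
        have h1 := ih 0
        have h2 := qb_succ p (0 + d) 0
        rw [qb_succ]
        simp only [qb_zero_right, Nat.sub_zero] at *
        linear_combination p * h1 - h2
      | succ m =>
        have x1 := ih (m + 1)
        have x2 := qb_succ p (m + 1 + d) (m + 1)
        have y1 := ih m
        have y2 := qb_succ p (m + 1 + d) m
        rw [qb_succ]
        rw [show m + 1 + d + 1 - (m + 1) = d + 1 by omega]
        rw [show m + 1 + d - (m + 1) = d by omega] at x1
        rw [show m + 1 + d - m = d + 1 by omega] at y1
        linear_combination p ^ (m + 2) * x1 - x2 - p ^ (d + 1) * y2 + y1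

lemma qb_absorb (n m : ℕ) :
    (1 - p ^ (m + 1)) * qb p (n + 1) (m + 1) = (1 - p ^ (n + 1)) * qb p n m := by
  rcases lt_or_ge n m with h | h
  · rw [qb_eq_zero p n m h, qb_eq_zero p (n + 1) (m + 1) (by omega)]; simp
  · obtain ⟨d, rfl⟩ : ∃ d, n = m + d := ⟨n - m, by omega⟩
    have h1 := qb_succ p (m + d) m
    have h2 := qb_succ' p (m + d) m
    rw [show m + d - m = d by omega] at h2
    have h3 : (1 - p ^ (m + 1)) * qb p (m + d) (m + 1) = (1 - p ^ d) * qb p (m + d) m := by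
      linear_combination h1 - h2
    rw [h1]
    linear_combination (p ^ (m + 1)) * h3

lemma qb_alt (n : ℕ) :
    ∀ N, ∑ m ∈ range (N + 1), (-1) ^ m * p ^ (m * (m - 1) / 2) * qb p (n + 1) m
      = (-1) ^ N * p ^ ((N + 1) * N / 2) * qb p n N := by
  intro N
  induction N with
  | zero => simp [qb_zero_right]
  | succ N ih =>
    rw [sum_range_succ, ih, qb_succ]
    have h : (N + 1 + 1) * (N + 1) / 2 = (N + 1) * N / 2 + (N + 1) := by
      rw [show (N + 1 + 1) * (N + 1) = (N + 1) * N + (N + 1) * 2 by ring]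
      omega
    rw [h, show N + 1 - 1 = N by omega, pow_succ (-1 : K) N, pow_add p]
    ring

lemma qb_pred (n : ℕ) : (1 - p) * qb p (n + 1) n = 1 - p ^ (n + 1) := by
  induction n with
  | zero => simp [qb_zero_right]
  | succ n ih =>
    rw [qb_succ, qb_self, mul_add, ih]; ring

end qbin

/-- The shuffle of the word `u` with copies of the letter `c`: the letters of `u` occupy
the positions in `S`. -/
def shuf (S : Finset ℕ) (u : ℕ → ℤ) (c : ℤ) : ℕ → ℤ :=
  fun i => if i ∈ S then u (Nat.count (· ∈ S) i) else c

lemma majStat_succ (n : ℕ) (x : ℕ → ℤ) :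
    majStat (n + 2) x = majStat (n + 1) x + if x (n + 1) < x n then n + 1 else 0 := by
  simp [majStat, sum_range_succ]

lemma majStat_one (x : ℕ → ℤ) : majStat 1 x = 0 := by simp [majStat]
lemma majStat_zero (x : ℕ → ℤ) : majStat 0 x = 0 := by simp [majStat]

lemma majStat_congr (n : ℕ) (x y : ℕ → ℤ)
    (h : ∀ i, i + 1 < n → (x (i + 1) < x i ↔ y (i + 1) < y i)) :
    majStat n x = majStat n y := by
  unfold majStat
  apply sum_congr rfl
  intro i hi
  rw [mem_range] at hi
  simp only [h i (by omega)]

lemma count_full (S : Finset ℕ) (n : ℕ) (h : S ⊆ range n) :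
    Nat.count (· ∈ S) n = #S := by
  rw [Nat.count_eq_card_filter_range]
  congr 1
  ext i
  simp only [mem_filter, mem_range]
  exact ⟨fun h => h.2, fun hi => ⟨mem_range.1 (h hi), hi⟩⟩

lemma shuf_insert_lt (S : Finset ℕ) (u : ℕ → ℤ) (c : ℤ) (n i : ℕ) (h : i < n) :
    shuf (insert n S) u c i = shuf S u c i := by
  have h1 : Nat.count (· ∈ insert n S) i = Nat.count (· ∈ S) i := by
    simp only [Nat.count_eq_card_filter_range]
    congr 1
    ext j
    simp only [mem_filter, mem_range, mem_insert]
    constructor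
    · rintro ⟨a, b | b⟩
      · omega
      · exact ⟨a, b⟩
    · rintro ⟨a, b⟩; exact ⟨a, Or.inr b⟩
  have h2 : i ∈ insert n S ↔ i ∈ S := by
    rw [mem_insert]; constructor
    · rintro (a | a)
      · omega
      · exact a
    · exact Or.inr
  unfold shuf
  simp only [h1, h2]

lemma shuf_insert_self (S : Finset ℕ) (u : ℕ → ℤ) (c : ℤ) (n : ℕ) (h : S ⊆ range n) :
    shuf (insert n S) u c n = u #S := by
  have h1 : Nat.count (· ∈ insert n S) n = Nat.count (· ∈ S) n := by
    simp only [Nat.count_eq_card_filter_range]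
    congr 1
    ext j
    simp only [mem_filter, mem_range, mem_insert]
    constructor
    · rintro ⟨a, b | b⟩
      · omega
      · exact ⟨a, b⟩
    · rintro ⟨a, b⟩; exact ⟨a, Or.inr b⟩
  unfold shuf
  rw [if_pos (mem_insert_self _ _), h1, count_full S n h]

lemma shuf_of_subset (S : Finset ℕ) (u : ℕ → ℤ) (c : ℤ) (n : ℕ) (h : S ⊆ range n) :
    shuf S u c n = c := by
  unfold shuf
  rw [if_neg]
  intro hn
  have := h hn
  simp at this

section shuffle

variable {K : Type*} [CommRing K] (p : K) (u : ℕ → ℤ) (c : ℤ)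

/-- shuffles ending with the letter `c` -/
def shA (n m : ℕ) : K :=
  ∑ S ∈ powersetCard m (range n), p ^ majStat (n + 1) (shuf S u c)

/-- shuffles ending with a letter of `u` -/
def shB (n m : ℕ) : K :=
  ∑ S ∈ powersetCard m (range n), p ^ majStat (n + 1) (shuf (insert n S) u c)

lemma sum_split (n m : ℕ) (f : Finset ℕ → K) :
    ∑ S ∈ powersetCard (m + 1) (range (n + 1)), f S
      = ∑ S ∈ powersetCard (m + 1) (range n), f S
        + ∑ S ∈ powersetCard m (range n), f (insert n S) := by
  rw [range_add_one, powersetCard_succ_insert (by simp), sum_union, sum_image]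
  · intro S hS T hT hST
    rw [mem_coe, mem_powersetCard] at hS hT
    have h1 : n ∉ S := fun h => by simpa using hS.1 h
    have h2 : n ∉ T := fun h => by simpa using hT.1 h
    have := congrArg (fun S => S.erase n) hST
    simpa [erase_insert h1, erase_insert h2] using this
  · rw [disjoint_left]
    intro S hS hS'
    rw [mem_powersetCard] at hS
    rw [mem_image] at hS'
    obtain ⟨T, _, rfl⟩ := hS'
    simpa using hS.1 (mem_insert_self n T)

lemma maj_end (n : ℕ) (S : Finset ℕ) (hS : S ⊆ range n) :
    majStat (n + 2) (shuf S u c) = majStat (n + 1) (shuf S u c) := by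
  rw [majStat_succ, shuf_of_subset S u c n hS,
    shuf_of_subset S u c (n + 1) (hS.trans (range_subset_range.2 (by omega)))]
  simp

lemma shA_zero (n : ℕ) : shA p u c (n + 1) 0 = shA p u c n 0 := by
  simp only [shA, powersetCard_zero, sum_singleton]
  rw [maj_end u c n ∅ (by simp)]

lemma shA_succ (n m : ℕ) : shA p u c (n + 1) (m + 1)
    = shA p u c n (m + 1) + p ^ (if c < u m then n + 1 else 0) * shB p u c n m := by
  unfold shA shB
  rw [sum_split, mul_sum]
  congr 1
  · apply sum_congr rfl
    intro S hS
    rw [mem_powersetCard] at hS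
    rw [maj_end u c n S hS.1]
  · apply sum_congr rfl
    intro S hS
    rw [mem_powersetCard] at hS
    rw [majStat_succ, shuf_insert_self S u c n hS.1, hS.2,
      shuf_of_subset (insert n S) u c (n + 1), pow_add, mul_comm]
    rw [range_add_one]
    exact insert_subset_insert _ hS.1

lemma shB_zero (n : ℕ) : shB p u c (n + 1) 0
    = p ^ (if u 0 < c then n + 1 else 0) * shA p u c n 0 := by
  simp only [shA, shB, powersetCard_zero, sum_singleton]
  rw [majStat_succ, shuf_insert_self ∅ u c (n + 1) (by simp),
    shuf_insert_lt _ _ _ _ _ (by omega), shuf_of_subset ∅ u c n (by simp), pow_add, mul_comm]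
  congr 2
  apply majStat_congr
  intro i hi
  rw [shuf_insert_lt _ _ _ _ _ (by omega), shuf_insert_lt _ _ _ _ _ (by omega)]

lemma shB_succ (n m : ℕ) : shB p u c (n + 1) (m + 1)
    = p ^ (if u (m + 1) < c then n + 1 else 0) * shA p u c n (m + 1)
      + p ^ (if u (m + 1) < u m then n + 1 else 0) * shB p u c n m := by
  have key : ∀ S : Finset ℕ, majStat (n + 1) (shuf (insert (n + 1) S) u c)
      = majStat (n + 1) (shuf S u c) := by
    intro S
    apply majStat_congr
    intro i hi
    rw [shuf_insert_lt _ _ _ _ _ (by omega), shuf_insert_lt _ _ _ _ _ (by omega)]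
  unfold shA shB
  rw [sum_split, mul_sum, mul_sum]
  congr 1
  · apply sum_congr rfl
    intro S hS
    rw [mem_powersetCard] at hS
    rw [majStat_succ, shuf_insert_self S u c (n + 1)
      (hS.1.trans (range_subset_range.2 (by omega))), hS.2,
      shuf_insert_lt _ _ _ _ _ (by omega), shuf_of_subset S u c n hS.1, key, pow_add, mul_comm]
  · apply sum_congr rfl
    intro S hS
    rw [mem_powersetCard] at hS
    have hsub : insert n S ⊆ range (n + 1) := by
      rw [range_add_one]
      exact insert_subset_insert _ hS.1
    rw [majStat_succ, shuf_insert_self (insert n S) u c (n + 1) hsub,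
      shuf_insert_lt _ _ _ _ _ (by omega), shuf_insert_self S u c n hS.1, key,
      card_insert_of_notMem (fun h => by simpa using hS.1 h), hS.2, pow_add, mul_comm]

lemma shAB (hu : ∀ i, u i ≠ c) (n : ℕ) :
    shA p u c n 0 = 1 ∧
    (∀ m, shA p u c n (m + 1)
      = p ^ (majStat (m + 1) u + if c < u m then m + 1 else 0) * qb p n (m + 1)) ∧
    (∀ m, shB p u c n m
      = p ^ (majStat (m + 1) u + if u m < c then n - m else 0) * qb p n m) := by
  induction n with
  | zero =>
    refine ⟨?_, ?_, ?_⟩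
    · simp [shA, majStat_one]
    · intro m; rw [shA, powersetCard_eq_empty.2 (by simp)]; simp [qb]
    · intro m
      cases m with
      | zero => simp [shB, qb, majStat_one]
      | succ m => rw [shB, powersetCard_eq_empty.2 (by simp)]; simp [qb]
  | succ n ih =>
    obtain ⟨h0, hA, hB⟩ := ih
    refine ⟨by rw [shA_zero, h0], ?_, ?_⟩
    · intro m
      rw [shA_succ, hA, hB]
      rcases lt_or_gt_of_ne (hu m) with h | h
      · simp only [h, h.not_gt, if_true, if_false, add_zero, pow_zero, one_mul]
        rw [qb_succ', pow_add]; ring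
      · simp only [h, h.not_gt, if_true, if_false, add_zero]
        rcases lt_or_ge n m with h' | h'
        · rw [qb_eq_zero p n m h', qb_eq_zero p _ _ (show n < m + 1 by omega),
            qb_eq_zero p _ _ (show n + 1 < m + 1 by omega)]; simp
        · obtain ⟨d, rfl⟩ : ∃ d, n = m + d := ⟨n - m, by omega⟩
          rw [qb_succ']
          rw [show m + d - m = d by omega]
          ring
    · intro m
      cases m with
      | zero =>
        rw [shB_zero, h0, qb_zero_right, majStat_one]
        simp
      | succ m =>
        rw [shB_succ, hA, hB, majStat_succ]
        rcases lt_or_ge n m with h' | h'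
        · rw [qb_eq_zero p n m h', qb_eq_zero p _ _ (show n < m + 1 by omega),
            qb_eq_zero p _ _ (show n + 1 < m + 1 by omega)]; simp
        · obtain ⟨d, rfl⟩ : ∃ d, n = m + d := ⟨n - m, by omega⟩
          rw [show m + d - m = d by omega, show m + d + 1 - (m + 1) = d by omega]
          have e1 := qb_succ p (m + d) m
          have e2 := qb_succ' p (m + d) m
          rw [show m + d - m = d by omega] at e2
          rcases lt_or_gt_of_ne (hu m) with h | h <;>
          rcases lt_or_gt_of_ne (hu (m + 1)) with h1 | h1
          · by_cases h2 : u (m + 1) < u m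
            · simp only [h, h.not_gt, h1, h1.not_gt, h2, if_true, if_false, add_zero]
              rw [e2]; ring
            · simp only [h, h.not_gt, h1, h1.not_gt, h2, if_true, if_false, add_zero]
              rw [e1]; ring
          · have h2 : ¬ u (m + 1) < u m := by omega
            simp only [h, h.not_gt, h1, h1.not_gt, h2, if_true, if_false, add_zero]
            rw [e2]; ring
          · have h2 : u (m + 1) < u m := by omega
            simp only [h, h.not_gt, h1, h1.not_gt, h2, if_true, if_false, add_zero]
            rw [e1]; ring
          · by_cases h2 : u (m + 1) < u m
            · simp only [h, h.not_gt, h1, h1.not_gt, h2, if_true, if_false, add_zero]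
              rw [e2]; ring
            · simp only [h, h.not_gt, h1, h1.not_gt, h2, if_true, if_false, add_zero]
              rw [e1]; ring

/-- The shuffle lemma. -/
lemma shuffle_sum (hu : ∀ i, u i ≠ c) (n m : ℕ) :
    ∑ S ∈ powersetCard m (range n), p ^ majStat n (shuf S u c)
      = p ^ majStat m u * qb p n m := by
  cases n with
  | zero =>
    cases m with
    | zero => simp [qb, majStat_zero]
    | succ m => rw [powersetCard_eq_empty.2 (by simp)]; simp [qb]
  | succ n =>
    obtain ⟨h0, hA, hB⟩ := shAB p u c hu n
    cases m with
    | zero =>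
      have := h0
      simp only [shA, powersetCard_zero, sum_singleton] at this ⊢
      rw [this]; simp [majStat_zero, qb_zero_right]
    | succ m =>
      rw [sum_split]
      have hA' := hA m
      have hB' := hB m
      unfold shA at hA'
      unfold shB at hB'
      rw [hA', hB']
      have e1 := qb_succ p n m
      have e2 := qb_succ' p n m
      rcases lt_or_gt_of_ne (hu m) with h | h
      · simp only [h, h.not_gt, if_true, if_false, add_zero]
        rw [e2]; ring
      · simp only [h, h.not_gt, if_true, if_false, add_zero]
        rw [e1]; ring

end shuffle

lemma sword_fin (n : ℕ) (w : Equiv.Perm (Fin n) × (Fin n → Bool)) (i : Fin n) :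
    sword n w i = if w.2 i = true then -(((w.1 i : ℕ) : ℤ) + 1) else ((w.1 i : ℕ) : ℤ) + 1 := by
  unfold sword
  rw [dif_pos i.2]

lemma negStat_sword (n : ℕ) (w : Equiv.Perm (Fin n) × (Fin n → Bool)) :
    negStat n (sword n w) = ∑ i : Fin n, if w.2 i = true then 1 else 0 := by
  unfold negStat
  rw [card_filter, Finset.sum_range]
  apply sum_congr rfl
  intro i _
  rw [sword_fin]
  by_cases h : w.2 i = true
  · rw [if_pos h, if_pos h, if_pos (by omega)]
  · rw [if_neg h, if_neg h, if_neg (by omega)]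

lemma fixPlus_sword (n : ℕ) (w : Equiv.Perm (Fin n) × (Fin n → Bool)) :
    fixPlus n (sword n w) = 0 ↔ ∀ i : Fin n, ¬ (w.1 i = i ∧ w.2 i = false) := by
  unfold fixPlus
  rw [card_eq_zero, filter_eq_empty_iff]
  constructor
  · intro h i hi
    refine h (mem_range.2 i.2) ?_
    rw [sword_fin, hi.1, hi.2]; simp
  · intro h i hi
    rw [mem_range] at hi
    have := h ⟨i, hi⟩
    have e := sword_fin n w ⟨i, hi⟩
    simp only at e
    rw [e]
    intro h2
    by_cases h3 : w.2 ⟨i, hi⟩ = true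
    · rw [if_pos h3] at h2; omega
    · rw [if_neg h3] at h2
      exact this ⟨Fin.ext (by simp only; omega), by simpa using h3⟩

/-- generating polynomial over all signed permutations -/
def BB {K : Type*} [CommRing K] (q Z : K) (n : ℕ) : K :=
  ∑ w : Equiv.Perm (Fin n) × (Fin n → Bool),
    q ^ fmajStat n (sword n w) * Z ^ negStat n (sword n w)

/-- insertion of the letter `±(n+1)` at position `p` -/
def ins (n : ℕ) (t : Fin (n + 1) × Bool × (Equiv.Perm (Fin n) × (Fin n → Bool))) :
    Equiv.Perm (Fin (n + 1)) × (Fin (n + 1) → Bool) :=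
  ((finSuccEquiv' t.1).trans ((Equiv.optionCongr t.2.2.1).trans (finSuccEquiv' (Fin.last n)).symm),
    Fin.insertNth (α := fun _ => Bool) t.1 t.2.1 t.2.2.2)

lemma ins_at (n : ℕ) (t) : (ins n t).1 t.1 = Fin.last n := by
  simp [ins]

lemma ins_succ (n : ℕ) (t) (j : Fin n) :
    (ins n t).1 (t.1.succAbove j) = (t.2.2.1 j).castSucc := by
  simp [ins]

lemma ins_sat (n : ℕ) (t) : (ins n t).2 t.1 = t.2.1 := by
  simp [ins]

lemma ins_ssucc (n : ℕ) (t) (j : Fin n) :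
    (ins n t).2 (t.1.succAbove j) = t.2.2.2 j := by
  simp [ins]

lemma ins_inj (n : ℕ) : Function.Injective (ins n) := by
  intro t t' h
  have h0 : t.1 = t'.1 := by
    apply (ins n t').1.injective
    rw [ins_at, ← h, ins_at]
  have h1 : t.2.1 = t'.2.1 := by
    rw [← ins_sat n t, ← ins_sat n t', h, h0]
  have h2 : t.2.2.1 = t'.2.2.1 := by
    ext j
    have a := ins_succ n t j
    have b := ins_succ n t' j
    rw [h, h0, b] at a
    have := congrArg Fin.val a
    simpa using this.symm
  have h3 : t.2.2.2 = t'.2.2.2 := by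
    ext j
    rw [← ins_ssucc n t j, ← ins_ssucc n t' j, h, h0]
  exact Prod.ext h0 (Prod.ext h1 (Prod.ext h2 h3))

lemma ins_bij (n : ℕ) : Function.Bijective (ins n) := by
  rw [Fintype.bijective_iff_injective_and_card]
  refine ⟨ins_inj n, ?_⟩
  simp only [Fintype.card_prod, Fintype.card_fin, Fintype.card_bool, Fintype.card_perm,
    Fintype.card_fun, Nat.factorial_succ]
  ring

lemma count_erase (N p : ℕ) (i : ℕ) (hi : i ≤ N) :
    Nat.count (· ∈ (range N).erase p) i = if i ≤ p then i else i - 1 := by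
  induction i with
  | zero => simp
  | succ i ih =>
    rw [Nat.count_succ, ih (by omega)]
    simp only [mem_erase, mem_range]
    split_ifs <;> omega

lemma ins_word (n : ℕ) (t) (i : ℕ) (hi : i < n + 1) :
    sword (n + 1) (ins n t) i = shuf ((range (n + 1)).erase t.1) (sword n t.2.2)
      (if t.2.1 = true then -((n : ℤ) + 1) else (n : ℤ) + 1) i := by
  have e := sword_fin (n + 1) (ins n t) ⟨i, hi⟩
  simp only at e
  rw [e]
  by_cases h : (⟨i, hi⟩ : Fin (n + 1)) = t.1
  · have hv : (t.1 : ℕ) = i := by rw [← h]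
    have hs : ∀ c, shuf ((range (n + 1)).erase t.1) (sword n t.2.2) c i = c := by
      intro c
      unfold shuf
      rw [if_neg]
      simp [hv]
    rw [hs, h, ins_at, ins_sat]
    simp
  · obtain ⟨j, hj⟩ := Fin.exists_succAbove_eq h
    have hv : (t.1 : ℕ) ≠ i := fun h' => h (Fin.ext h'.symm)
    have hj' := congrArg Fin.val hj
    simp only [Fin.succAbove, Fin.lt_def, Fin.val_castSucc] at hj'
    have this : (if i ≤ (t.1 : ℕ) then i else i - 1) = (j : ℕ) := by
      split_ifs at hj' ⊢ <;> simp at hj' <;> omega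
    have hs : ∀ c, shuf ((range (n + 1)).erase t.1) (sword n t.2.2) c i = sword n t.2.2 j := by
      intro c
      unfold shuf
      rw [count_erase _ _ _ hi.le, this, if_pos]
      rw [mem_erase]
      exact ⟨hv.symm, mem_range.2 hi⟩
    rw [hs, ← hj, ins_succ, ins_ssucc, sword_fin]
    simp

lemma sum_erase_eq {K : Type*} [CommRing K] (n : ℕ) (g : Finset ℕ → K) :
    ∑ p : Fin (n + 1), g ((range (n + 1)).erase p)
      = ∑ S ∈ powersetCard n (range (n + 1)), g S := by
  apply sum_bij (fun (p : Fin (n + 1)) _ => (range (n + 1)).erase (p : ℕ))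
  · intro p _
    rw [mem_powersetCard]
    refine ⟨erase_subset _ _, ?_⟩
    rw [card_erase_of_mem (mem_range.2 p.2)]; simp
  · intro p _ p' _ h
    by_contra hne
    have : (p : ℕ) ∈ (range (n + 1)).erase (p' : ℕ) := by
      rw [mem_erase]
      exact ⟨fun h => hne (Fin.ext h), mem_range.2 p.2⟩
    rw [← h] at this
    simp at this
  · intro S hS
    rw [mem_powersetCard] at hS
    have : ∃ p ∈ range (n + 1), p ∉ S := by
      by_contra hcon
      push Not at hcon
      have := card_le_card (show range (n + 1) ⊆ S from hcon)
      rw [hS.2, card_range] at this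
      omega
    obtain ⟨p, hp, hpS⟩ := this
    refine ⟨⟨p, mem_range.1 hp⟩, mem_univ _, ?_⟩
    symm
    apply eq_of_subset_of_card_le
    · intro x hx
      rw [mem_erase]
      refine ⟨fun h => hpS ?_, hS.1 hx⟩
      rw [show x = p from h] at hx
      exact hx
    · rw [card_erase_of_mem hp, hS.2]; simp
  · intro p _; rfl

lemma ins_neg (n : ℕ) (t) : negStat (n + 1) (sword (n + 1) (ins n t))
    = negStat n (sword n t.2.2) + if t.2.1 = true then 1 else 0 := by
  rw [negStat_sword, negStat_sword, Fin.sum_univ_succAbove _ t.1, ins_sat, add_comm]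
  simp only [ins_ssucc]

lemma sword_ne (n : ℕ) (w) (i : ℕ) (b : Bool) :
    sword n w i ≠ (if b = true then -((n : ℤ) + 1) else (n : ℤ) + 1) := by
  unfold sword
  by_cases h : i < n
  · rw [dif_pos h]
    have := (w.1 ⟨i, h⟩).2
    split_ifs <;> omega
  · rw [dif_neg h]
    split_ifs <;> omega

lemma BB_succ {K : Type*} [CommRing K] (q Z : K) (n : ℕ) :
    BB q Z (n + 1) = (1 + q * Z) * qb (q ^ 2) (n + 1) n * BB q Z n := by
  unfold BB
  rw [← Function.Bijective.sum_comp (ins_bij n)]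
  rw [Fintype.sum_prod_type, sum_comm, Fintype.sum_prod_type, sum_comm, mul_sum]
  apply sum_congr rfl
  intro w _
  have key : ∀ b : Bool, ∑ p : Fin (n + 1),
      q ^ fmajStat (n + 1) (sword (n + 1) (ins n (p, b, w))) *
        Z ^ negStat (n + 1) (sword (n + 1) (ins n (p, b, w)))
      = (q * Z) ^ (if b = true then 1 else 0) * qb (q ^ 2) (n + 1) n *
        (q ^ fmajStat n (sword n w) * Z ^ negStat n (sword n w)) := by
    intro b
    have h := shuffle_sum (q ^ 2) (sword n w) (if b = true then -((n : ℤ) + 1) else (n : ℤ) + 1)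
      (fun i => sword_ne n w i b) (n + 1) n
    rw [← sum_erase_eq] at h
    have h2 : ∀ p : Fin (n + 1), q ^ fmajStat (n + 1) (sword (n + 1) (ins n (p, b, w))) *
        Z ^ negStat (n + 1) (sword (n + 1) (ins n (p, b, w)))
        = (q * Z) ^ (if b = true then 1 else 0) * (q * Z) ^ negStat n (sword n w) *
          (q ^ 2) ^ majStat (n + 1) (shuf ((range (n + 1)).erase p) (sword n w)
            (if b = true then -((n : ℤ) + 1) else (n : ℤ) + 1)) := by
      intro p
      have hm : majStat (n + 1) (sword (n + 1) (ins n (p, b, w)))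
          = majStat (n + 1) (shuf ((range (n + 1)).erase p) (sword n w)
            (if b = true then -((n : ℤ) + 1) else (n : ℤ) + 1)) := by
        apply majStat_congr
        intro i hi
        rw [ins_word _ _ _ hi, ins_word _ _ _ (by omega)]
      unfold fmajStat
      rw [ins_neg, hm]
      simp only [pow_add, pow_mul, mul_pow]
      ring
    rw [sum_congr rfl (fun p _ => h2 p), ← mul_sum, h]
    unfold fmajStat
    simp only [pow_add, pow_mul, mul_pow]
    ring
  rw [Fintype.sum_bool, key, key]
  simp
  ring

/-- the set of positions that are not positive fixed points -/
def nfx (n : ℕ) (w : Equiv.Perm (Fin n) × (Fin n → Bool)) : Finset (Fin n) :=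
  Finset.univ.filter (fun i => ¬ (w.1 i = i ∧ w.2 i = false))

/-- extension of a signed permutation by fixed points -/
def ext' {n m : ℕ} (S : Finset (Fin n)) (f : Fin m ≃ {i // i ∈ S})
    (d : Equiv.Perm (Fin m) × (Fin m → Bool)) : Equiv.Perm (Fin n) × (Fin n → Bool) :=
  (d.1.extendDomain f, fun i => if h : i ∈ S then d.2 (f.symm ⟨i, h⟩) else false)

section ext

variable {n m : ℕ} (S : Finset (Fin n)) (f : Fin m ≃ {i // i ∈ S})
    (d : Equiv.Perm (Fin m) × (Fin m → Bool))

lemma ext'_p (j : Fin m) : (ext' S f d).1 (f j) = f (d.1 j) := by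
  simp [ext', Equiv.Perm.extendDomain_apply_image]

lemma ext'_s (j : Fin m) : (ext' S f d).2 (f j) = d.2 j := by
  simp [ext']

lemma ext'_pn (i : Fin n) (h : i ∉ S) : (ext' S f d).1 i = i := by
  simp only [ext']
  exact Equiv.Perm.extendDomain_apply_not_subtype _ _ h

lemma ext'_sn (i : Fin n) (h : i ∉ S) : (ext' S f d).2 i = false := by
  simp [ext', h]

lemma ext'_inj : Function.Injective (ext' S f) := by
  intro d d' h
  apply Prod.ext
  · ext1 j
    have a := ext'_p S f d j
    rw [h, ext'_p] at a
    exact (f.injective (Subtype.ext a)).symm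
  · ext1 j
    rw [← ext'_s S f d, h, ext'_s]

lemma ext'_neg : negStat n (sword n (ext' S f d)) = negStat m (sword m d) := by
  rw [negStat_sword, negStat_sword]
  rw [← sum_subset (subset_univ S)]
  · rw [← sum_coe_sort S, ← Equiv.sum_comp f]
    apply sum_congr rfl
    intro j _
    rw [ext'_s]
  · intro i _ hi
    rw [ext'_sn S f d i hi]; simp

lemma ext'_nfx (hd : fixPlus m (sword m d) = 0) : nfx n (ext' S f d) = S := by
  rw [fixPlus_sword] at hd
  ext i
  simp only [nfx, mem_filter, mem_univ, true_and]
  by_cases h : i ∈ S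
  · simp only [h, iff_true]
    obtain ⟨j, hj⟩ := f.surjective ⟨i, h⟩
    have : i = (f j : Fin n) := by rw [hj]
    rw [this, ext'_p, ext'_s]
    intro hh
    exact hd j ⟨f.injective (Subtype.ext hh.1), hh.2⟩
  · simp only [h, iff_false, not_not]
    exact ⟨ext'_pn S f d i h, ext'_sn S f d i h⟩

lemma ext'_surj (w : Equiv.Perm (Fin n) × (Fin n → Bool)) (hw : nfx n w = S) :
    ∃ d, fixPlus m (sword m d) = 0 ∧ ext' S f d = w := by
  have hin : ∀ i, i ∈ S ↔ ¬ (w.1 i = i ∧ w.2 i = false) := by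
    intro i; rw [← hw]; simp [nfx]
  have hout : ∀ i, i ∉ S → w.1 i = i ∧ w.2 i = false := by
    intro i hi
    rw [hin] at hi
    exact not_not.1 hi
  have hst : ∀ i, w.1 i ∈ S ↔ i ∈ S := by
    intro i
    constructor
    · intro h
      by_contra hi
      rw [(hout i hi).1] at h
      exact hi h
    · intro h
      by_contra hi
      have := w.1.injective (hout _ hi).1
      rw [this] at hi
      exact hi h
  let d : Equiv.Perm (Fin m) × (Fin m → Bool) :=
    (f.permCongr.symm (w.1.subtypePerm hst), fun j => w.2 (f j))
  have hd1 : ∀ j, (f (d.1 j) : Fin n) = w.1 (f j) := by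
    intro j
    simp [d]
  refine ⟨d, ?_, ?_⟩
  · rw [fixPlus_sword]
    intro j hj
    have := (hin (f j)).1 (f j).2
    apply this
    refine ⟨?_, hj.2⟩
    rw [← hd1, hj.1]
  · apply Prod.ext
    · ext1 i
      by_cases h : i ∈ S
      · obtain ⟨j, hj⟩ := f.surjective ⟨i, h⟩
        have : i = (f j : Fin n) := by rw [hj]
        rw [this, ext'_p, hd1]
      · rw [ext'_pn S f d i h, (hout i h).1]
    · ext1 i
      by_cases h : i ∈ S
      · obtain ⟨j, hj⟩ := f.surjective ⟨i, h⟩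
        have : i = (f j : Fin n) := by rw [hj]
        rw [this, ext'_s]
      · rw [ext'_sn S f d i h, (hout i h).2]

end ext

/-- the word in which excedances are positive, and the other letters negative -/
def til (m : ℕ) (x : ℕ → ℤ) : ℕ → ℤ :=
  fun j => if (j : ℤ) + 1 < x j then x j else x j - (m + 1)

lemma sword_le (m : ℕ) (d) (j : ℕ) : sword m d j ≤ m := by
  unfold sword
  by_cases h : j < m
  · rw [dif_pos h]
    have := (d.1 ⟨j, h⟩).2
    split_ifs <;> omega
  · rw [dif_neg h]
    omega

lemma til_ne (m : ℕ) (d) (j : ℕ) : til m (sword m d) j ≠ 0 := by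
  have := sword_le m d j
  unfold til
  split_ifs <;> omega

lemma count_iso {n m : ℕ} (S : Finset (Fin n)) (f : Fin m ≃o {i // i ∈ S}) (j : Fin m) :
    Nat.count (· ∈ S.map Fin.valEmbedding) ((f j : Fin n) : ℕ) = j := by
  rw [Nat.count_eq_card_filter_range]
  have : (range ((f j : Fin n) : ℕ)).filter (· ∈ S.map Fin.valEmbedding)
      = (Finset.Iio j).image (fun k => ((f k : Fin n) : ℕ)) := by
    ext i
    simp only [mem_filter, mem_range, mem_map, mem_image, mem_Iio, Fin.valEmbedding_apply]
    constructor
    · rintro ⟨h1, a, ha, rfl⟩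
      obtain ⟨k, hk⟩ := f.surjective ⟨a, ha⟩
      refine ⟨k, ?_, by rw [hk]⟩
      rw [← f.lt_iff_lt, hk]
      exact h1
    · rintro ⟨k, hk, rfl⟩
      refine ⟨?_, _, (f k).2, rfl⟩
      rw [← f.lt_iff_lt] at hk
      exact hk
  rw [this, card_image_of_injective, Fin.card_Iio]
  intro a b h
  exact f.injective (Subtype.ext (Fin.ext h))

lemma ext'_maj {n m : ℕ} (S : Finset (Fin n)) (f : Fin m ≃o {i // i ∈ S})
    (d : Equiv.Perm (Fin m) × (Fin m → Bool)) (hd : fixPlus m (sword m d) = 0) :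
    majStat n (sword n (ext' S f.toEquiv d))
      = majStat n (shuf (S.map Fin.valEmbedding) (til m (sword m d)) 0) := by
  rw [fixPlus_sword] at hd
  have hlt : ∀ a b : Fin m, ((f a : Fin n) : ℕ) < ((f b : Fin n) : ℕ) ↔ (a : ℕ) < (b : ℕ) := by
    intro a b
    exact f.lt_iff_lt
  have hin : ∀ j : Fin m,
      sword n (ext' S f.toEquiv d) ((f j : Fin n) : ℕ)
        = (if d.2 j = true then -((((f (d.1 j) : Fin n) : ℕ) : ℤ) + 1)
          else (((f (d.1 j) : Fin n) : ℕ) : ℤ) + 1) ∧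
      shuf (S.map Fin.valEmbedding) (til m (sword m d)) 0 ((f j : Fin n) : ℕ)
        = til m (sword m d) j := by
    intro j
    constructor
    · rw [sword_fin]
      have h1 := ext'_p S f.toEquiv d j
      have h2 := ext'_s S f.toEquiv d j
      simp only [OrderIso.coe_toEquiv] at h1 h2
      rw [h1, h2]
    · unfold shuf
      rw [count_iso, if_pos]
      rw [mem_map]
      exact ⟨_, (f j).2, rfl⟩
  have hout : ∀ i : Fin n, i ∉ S →
      sword n (ext' S f.toEquiv d) i = (i : ℤ) + 1 ∧
      shuf (S.map Fin.valEmbedding) (til m (sword m d)) 0 i = 0 := by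
    intro i hi
    constructor
    · rw [sword_fin, ext'_pn _ _ _ _ hi, ext'_sn _ _ _ _ hi]; simp
    · unfold shuf
      rw [if_neg]
      rw [mem_map]
      rintro ⟨a, ha, h⟩
      exact hi ((Fin.ext h : a = i) ▸ ha)
  have hder : ∀ j : Fin m, d.2 j = true ∨ (d.1 j : ℕ) ≠ (j : ℕ) := by
    intro j
    refine or_iff_not_imp_left.2 fun h1 h2 => ?_
    exact hd j ⟨Fin.ext h2, by simpa using h1⟩
  have hall : ∀ i : Fin n, (∃ j, (f j : Fin n) = i) ∨ i ∉ S := by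
    intro i
    by_cases h : i ∈ S
    · obtain ⟨j, hj⟩ := f.surjective ⟨i, h⟩
      exact Or.inl ⟨j, by rw [hj]⟩
    · exact Or.inr h
  have htil : ∀ j : Fin m, til m (sword m d) j
      = if d.2 j = true then -(((d.1 j : ℕ) : ℤ) + 1) - (m + 1)
        else if (j : ℕ) < (d.1 j : ℕ) then ((d.1 j : ℕ) : ℤ) + 1
        else ((d.1 j : ℕ) : ℤ) + 1 - (m + 1) := by
    intro j
    unfold til
    rw [sword_fin]
    split_ifs <;> omega
  apply majStat_congr
  intro i hi
  have hb : ∀ j : Fin m, (d.1 j : ℕ) < m := fun j => (d.1 j).2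
  rcases hall ⟨i, by omega⟩ with ⟨j, hj⟩ | hj <;>
  rcases hall ⟨i + 1, hi⟩ with ⟨k, hk⟩ | hk
  · have ej : ((f j : Fin n) : ℕ) = i := by rw [hj]
    have ek : ((f k : Fin n) : ℕ) = i + 1 := by rw [hk]
    obtain ⟨a1, a2⟩ := hin j
    obtain ⟨b1, b2⟩ := hin k
    rw [ej] at a1 a2
    rw [ek] at b1 b2
    rw [a1, a2, b1, b2, htil, htil]
    have c1 := hlt j (d.1 j)
    have c2 := hlt (d.1 j) j
    have c3 := hlt k (d.1 k)
    have c4 := hlt (d.1 k) k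
    have c5 := hlt (d.1 j) (d.1 k)
    have c6 := hlt (d.1 k) (d.1 j)
    have c7 := hder j
    have c8 := hder k
    have c9 := hb j
    have c10 := hb k
    by_cases hs : d.2 j = true <;> by_cases ht : d.2 k = true <;>
      simp only [hs, ht, if_true, if_false, true_or, false_or, Bool.false_eq_true] at c7 c8 ⊢ <;>
      (try split_ifs) <;> constructor <;> intro hh <;> omega
  · have ej : ((f j : Fin n) : ℕ) = i := by rw [hj]
    obtain ⟨a1, a2⟩ := hin j
    obtain ⟨b1, b2⟩ := hout _ hk
    rw [ej] at a1 a2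
    simp only at b1 b2
    rw [a1, a2, b1, b2, htil]
    have c1 := hlt j (d.1 j)
    have c2 := hlt (d.1 j) j
    have c7 := hder j
    have c9 := hb j
    have c10 : ((f (d.1 j) : Fin n) : ℕ) ≠ i + 1 := by
      intro h
      apply hk
      have : (⟨i + 1, hi⟩ : Fin n) = (f (d.1 j) : Fin n) := Fin.ext h.symm
      rw [this]; exact (f _).2
    by_cases hs : d.2 j = true <;>
      simp only [hs, if_true, if_false, true_or, false_or, Bool.false_eq_true] at c7 ⊢ <;>
      (try split_ifs) <;> constructor <;> intro hh <;> omega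
  · have ek : ((f k : Fin n) : ℕ) = i + 1 := by rw [hk]
    obtain ⟨a1, a2⟩ := hin k
    obtain ⟨b1, b2⟩ := hout _ hj
    rw [ek] at a1 a2
    simp only at b1 b2
    rw [a1, a2, b1, b2, htil]
    have c1 := hlt k (d.1 k)
    have c2 := hlt (d.1 k) k
    have c7 := hder k
    have c9 := hb k
    have c10 : ((f (d.1 k) : Fin n) : ℕ) ≠ i := by
      intro h
      apply hj
      have : (⟨i, by omega⟩ : Fin n) = (f (d.1 k) : Fin n) := Fin.ext h.symm
      rw [this]; exact (f _).2
    by_cases hs : d.2 k = true <;>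
      simp only [hs, if_true, if_false, true_or, false_or, Bool.false_eq_true] at c7 ⊢ <;>
      (try split_ifs) <;> constructor <;> intro hh <;> omega
  · obtain ⟨a1, a2⟩ := hout _ hj
    obtain ⟨b1, b2⟩ := hout _ hk
    simp only at a1 a2 b1 b2
    rw [a1, a2, b1, b2]
    constructor <;> intro hh <;> omega

lemma til_maj (m : ℕ) (d : Equiv.Perm (Fin m) × (Fin m → Bool))
    (hd : fixPlus m (sword m d) = 0) :
    majStat m (til m (sword m d)) = majStat m (sword m d) := by
  apply majStat_congr
  intro i hi
  have hne : ∀ i, i < m → sword m d i ≠ (i : ℤ) + 1 := by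
    intro i hi h
    unfold fixPlus at hd
    rw [card_eq_zero, filter_eq_empty_iff] at hd
    exact hd (mem_range.2 hi) h
  have h1 := hne i (by omega)
  have h2 := hne (i + 1) hi
  have h3 := sword_le m d i
  have h4 := sword_le m d (i + 1)
  unfold til
  push_cast at *
  split_ifs <;> omega

lemma fiber_sum {K : Type*} [CommRing K] (q Z : K) {n m : ℕ} (S : Finset (Fin n)) (h : #S = m) :
    ∑ w ∈ Finset.univ.filter (fun w => nfx n w = S),
      q ^ fmajStat n (sword n w) * Z ^ negStat n (sword n w)
    = ∑ d ∈ Finset.univ.filter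
      (fun d : Equiv.Perm (Fin m) × (Fin m → Bool) => fixPlus m (sword m d) = 0),
      (q * Z) ^ negStat m (sword m d) *
        (q ^ 2) ^ majStat n (shuf (S.map Fin.valEmbedding) (til m (sword m d)) 0) := by
  symm
  let f := S.orderIsoOfFin h
  apply sum_bij (fun d _ => ext' S f.toEquiv d)
  · intro d hd
    rw [mem_filter] at hd ⊢
    exact ⟨mem_univ _, ext'_nfx S f.toEquiv d hd.2⟩
  · intro d _ d' _ hh
    exact ext'_inj S f.toEquiv hh
  · intro w hw
    rw [mem_filter] at hw
    obtain ⟨d, h1, h2⟩ := ext'_surj S f.toEquiv w hw.2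
    exact ⟨d, by rw [mem_filter]; exact ⟨mem_univ _, h1⟩, h2⟩
  · intro d hd
    rw [mem_filter] at hd
    unfold fmajStat
    rw [ext'_neg, ext'_maj S f d hd.2, pow_add, pow_mul, mul_pow]
    ring

lemma BB_eq {K : Type*} [CommRing K] (q Z : K) (n : ℕ) :
    BB q Z n = ∑ m ∈ range (n + 1), qb (q ^ 2) n m * DB q Z m := by
  unfold BB
  rw [← sum_fiberwise (s := Finset.univ) (g := nfx n), ← powerset_univ,
    sum_powerset, card_univ, Fintype.card_fin]
  apply sum_congr rfl
  intro m _
  rw [sum_congr rfl (fun S hS => fiber_sum q Z S (mem_powersetCard.1 hS).2), sum_comm]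
  unfold DB
  rw [mul_sum]
  apply sum_congr rfl
  intro d hd
  rw [mem_filter] at hd
  have h := shuffle_sum (q ^ 2) (til m (sword m d)) 0 (til_ne m d) n m
  rw [til_maj m d hd.2] at h
  have h2 : range n = (Finset.univ : Finset (Fin n)).map Fin.valEmbedding := by
    ext i
    simp only [mem_range, mem_map, mem_univ, true_and, Fin.valEmbedding_apply]
    exact ⟨fun h => ⟨⟨i, h⟩, rfl⟩, fun ⟨a, ha⟩ => ha ▸ a.2⟩
  rw [h2, powersetCard_map, sum_map] at h
  rw [← mul_sum]
  have h3 : ∀ x : Finset (Fin n), (mapEmbedding Fin.valEmbedding).toEmbedding x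
      = x.map Fin.valEmbedding := fun _ => rfl
  simp only [h3] at h
  rw [h]
  unfold fmajStat
  rw [pow_add, pow_mul, mul_pow]
  ring

lemma DB_zero {K : Type*} [CommRing K] (q Z : K) : DB q Z 0 = 1 := by
  have h := BB_eq q Z 0
  have h2 : BB q Z 0 = 1 := by
    simp [BB, fmajStat, majStat, negStat]
  rw [h2] at h
  simpa [qb_zero_right] using h.symm

/-- the sequence defined by the recurrence -/
def EE {K : Type*} [Field K] (q Z : K) : ℕ → K
  | 0 => 1
  | n + 1 => (1 + q * Z) * ((1 - q ^ (2 * n + 2)) / (1 - q ^ 2)) * EE q Z n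
          + (-1) ^ (n + 1) * q ^ (n * (n + 1))

lemma EE_sum {K : Type*} [Field K] (q Z : K) (hq : (1 : K) - q ^ 2 ≠ 0) (n : ℕ) :
    BB q Z n = ∑ m ∈ range (n + 1), qb (q ^ 2) n m * EE q Z m := by
  induction n with
  | zero => rw [BB_eq]; simp [DB_zero, EE]
  | succ n ih =>
    rw [BB_succ, ih, sum_range_succ' _ (n + 1), qb_zero_right]
    have h1 := qb_pred (q ^ 2) n
    have h2 : ∀ m, qb (q ^ 2) (n + 1) (m + 1) * EE q Z (m + 1)
        = (1 + q * Z) * qb (q ^ 2) (n + 1) n * (qb (q ^ 2) n m * EE q Z m)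
          + (-1) ^ (m + 1) * (q ^ 2) ^ ((m + 1) * (m + 1 - 1) / 2)
            * qb (q ^ 2) (n + 1) (m + 1) := by
      intro m
      have e : (q ^ 2) ^ ((m + 1) * (m + 1 - 1) / 2) = q ^ (m * (m + 1)) := by
        rw [← pow_mul]
        congr 1
        rw [Nat.add_sub_cancel, mul_comm (m + 1) m]
        exact Nat.mul_div_cancel' (Nat.even_mul_succ_self m).two_dvd
      rw [e, EE]
      have h3 := qb_absorb (q ^ 2) n m
      have h4 : (1 - q ^ (2 * m + 2)) / (1 - q ^ 2) * qb (q ^ 2) (n + 1) (m + 1)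
          = qb (q ^ 2) (n + 1) n * qb (q ^ 2) n m := by
        rw [div_mul_eq_mul_div, div_eq_iff hq]
        rw [← pow_mul, ← pow_mul, show 2 * (m + 1) = 2 * m + 2 by ring] at h3
        rw [← pow_mul] at h1
        linear_combination h3 - qb (q ^ 2) n m * h1
      linear_combination (1 + q * Z) * EE q Z m * h4
    rw [sum_congr rfl (fun m _ => h2 m), sum_add_distrib, ← mul_sum]
    have h5 := qb_alt (q ^ 2) n (n + 1)
    rw [qb_eq_zero _ n (n + 1) (by omega), sum_range_succ'] at h5
    simp only [qb_zero_right, pow_zero, zero_mul, Nat.zero_div, mul_zero, mul_one] at h5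
    simp only [EE, mul_one]
    rw [add_assoc, h5, add_zero]

lemma DB_eq_EE {K : Type*} [Field K] (q Z : K) (hq : (1 : K) - q ^ 2 ≠ 0) (n : ℕ) :
    DB q Z n = EE q Z n := by
  induction n using Nat.strong_induction_on with
  | _ n ih =>
    have h := (BB_eq q Z n).symm.trans (EE_sum q Z hq n)
    rw [sum_range_succ, sum_range_succ, qb_self, one_mul, one_mul,
      sum_congr rfl (fun m hm => by rw [ih m (mem_range.1 hm)])] at h
    exact add_left_cancel h

theorem stmt11 (K : Type*) [Field K] (q Z : K) (hq : (1 : K) - q ^ 2 ≠ 0) :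
    DB q Z 0 = 1 ∧
    ∀ n : ℕ, DB q Z (n + 1)
      = (1 + q * Z) * ((1 - q ^ (2 * n + 2)) / (1 - q ^ 2)) * DB q Z n
          + (-1) ^ (n + 1) * q ^ (n * (n + 1)) := by
  refine ⟨DB_zero q Z, fun n => ?_⟩
  rw [DB_eq_EE q Z hq, DB_eq_EE q Z hq, EE]
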